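/- The function a : ℝ⁸ → ℂ is a radial Schwartz function and is a +1-eigenfunction of the Fourier transform on ℝ⁸: â = a, where â(ξ) = ∫_{ℝ⁸} a(x) e^{−2πi⟨x,ξ⟩} dx. -/

import Mathlib

/-!
The modular input about `φ₀ = (E₂E₄ - E₆)² / Δ` is small: it is holomorphic on the upper half-plane,
it has period `1`, and it is `O(e^{-2π Im u})` as `Im u → ∞`, because the numerator is a multiple of
`q²` and `Δ` vanishes to order exactly `1` (`differentiableOn_φ₀`, `φ₀_add_one`,
`exists_norm_φ₀_le`). The transformation law of `φ₀` under `z ↦ -1/z` is not needed.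

After the substitution `u = -1/w` (with `w = z + 1`, `z - 1`, `z` on the three contours ending at a
cusp) the integrand becomes the holomorphic function `h(u) = φ₀(u) u⁻⁴ e^{πi‖x‖²(-1/u)}` up to a
constant factor. It decays exponentially towards `i∞`, uniformly in vertical strips, so the contours
can be moved to vertical rays (`exists_vertical_integrals`): the first to `Re u = -1/2, Im u > 1/2`,
the second to `Re u = 1/2, Im u > 1/2`, the third to `Re u = 0, Im u > 1`. This writes
`a = J₁ + J₂ + J₃ + J₄` (`funA_eq`), each `Jᵢ` being a superposition `∫ g(t) e^{πi‖x‖²z(t)} dt` of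
Gaussians with `g(t) = O(e^{-2πt})` and `Im z(t)` at least a multiple of `1/t`.

Such superpositions can be Fourier transformed under the integral sign, and on `ℝ⁸` the transform of
`e^{πi‖x‖²z}` is `z⁻⁴ e^{πi‖ξ‖²(-1/z)}` (`Admissible.fourier_gaussInt`). With the chosen rays this
matches integrands pointwise: on the first ray `z = -1 - 1/u`, hence `-1/z = 1 - 1/(u + 1)` and
`z⁻⁴ u⁻⁴ = (u + 1)⁻⁴`, so periodicity of `φ₀` gives `𝓕 J₁ = J₂`, and similarly `𝓕 J₂ = J₁`,
`𝓕 J₃ = J₄`, `𝓕 J₄ = J₃`. Therefore `𝓕 a = a`.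

The paths of `J₁, J₂, J₃` stay in the closed unit disc, so each is a smooth function of `‖x‖²` all of
whose derivatives decay rapidly, hence a Schwartz function (`Admissible.exists_schwartz`); and
`J₄ = 𝓕 J₃` is then Schwartz too.
-/

open Complex

/-- The normalized weight-2 Eisenstein series `E₂` on the upper half-plane (constant term 1),
given by its `q`-expansion `1 - 24 ∑ σ₁(n) qⁿ`, extended by the same formula to all of `ℂ`. -/
noncomputable def E₂ (z : ℂ) : ℂ :=
  1 - 24 * ∑' n : ℕ+, (ArithmeticFunction.sigma 1 (n : ℕ) : ℂ) *
    Complex.exp (2 * Real.pi * I * (n : ℕ) * z)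

/-- The normalized weight-4 Eisenstein series `E₄` (constant term 1),
given by its `q`-expansion `1 + 240 ∑ σ₃(n) qⁿ`. -/
noncomputable def E₄ (z : ℂ) : ℂ :=
  1 + 240 * ∑' n : ℕ+, (ArithmeticFunction.sigma 3 (n : ℕ) : ℂ) *
    Complex.exp (2 * Real.pi * I * (n : ℕ) * z)

/-- The normalized weight-6 Eisenstein series `E₆` (constant term 1),
given by its `q`-expansion `1 - 504 ∑ σ₅(n) qⁿ`. -/
noncomputable def E₆ (z : ℂ) : ℂ :=
  1 - 504 * ∑' n : ℕ+, (ArithmeticFunction.sigma 5 (n : ℕ) : ℂ) *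
    Complex.exp (2 * Real.pi * I * (n : ℕ) * z)

/-- The modular discriminant `Δ = (E₄³ - E₆²) / 1728`. -/
noncomputable def Δ (z : ℂ) : ℂ := (E₄ z ^ 3 - E₆ z ^ 2) / 1728

/-- Viazovska's weakly holomorphic quasimodular form `φ₀ = (E₂E₄ - E₆)² / Δ`. -/
noncomputable def φ₀ (z : ℂ) : ℂ := (E₂ z * E₄ z - E₆ z) ^ 2 / Δ z

/-- The Jacobi theta-nullwert `θ₀₀(z) = ∑_{n ∈ ℤ} e^{πin²z}`. -/
noncomputable def θ₀₀ (z : ℂ) : ℂ := ∑' n : ℤ, Complex.exp (Real.pi * I * (n : ℂ) ^ 2 * z)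

/-- The Jacobi theta-nullwert `θ₀₁(z) = ∑_{n ∈ ℤ} (-1)ⁿ e^{πin²z}`. -/
noncomputable def θ₀₁ (z : ℂ) : ℂ :=
  ∑' n : ℤ, (-1 : ℂ) ^ n * Complex.exp (Real.pi * I * (n : ℂ) ^ 2 * z)

/-- The Jacobi theta-nullwert `θ₁₀(z) = ∑_{n ∈ ℤ} e^{πi(n+1/2)²z}`. -/
noncomputable def θ₁₀ (z : ℂ) : ℂ :=
  ∑' n : ℤ, Complex.exp (Real.pi * I * ((n : ℂ) + 1 / 2) ^ 2 * z)

/-- Viazovska's modular form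
`ψ_S = 128((θ₀₁⁴ - θ₁₀⁴)/θ₀₀⁸ - (θ₁₀⁴ + θ₀₀⁴)/θ₀₁⁸)`. -/
noncomputable def ψS (z : ℂ) : ℂ :=
  128 * ((θ₀₁ z ^ 4 - θ₁₀ z ^ 4) / θ₀₀ z ^ 8 - (θ₁₀ z ^ 4 + θ₀₀ z ^ 4) / θ₀₁ z ^ 8)

open scoped Real

/-- The complex line integral of `f` along the straight segment from `w₁` to `w₂`. -/
noncomputable def segInt (f : ℂ → ℂ) (w₁ w₂ : ℂ) : ℂ :=
  (w₂ - w₁) * ∫ t in (0 : ℝ)..1, f (w₁ + (t : ℂ) * (w₂ - w₁))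

/-- The complex line integral of `f` along the vertical ray on the imaginary axis
from `c * i` to `i∞`, parametrized as `t ↦ t * i`. -/
noncomputable def imAxisRayInt (f : ℂ → ℂ) (c : ℝ) : ℂ :=
  ∫ t in Set.Ioi c, f ((t : ℂ) * I) * I

/-- The Gaussian kernel `e^{πi‖x‖²z}` appearing in the integrands. -/
noncomputable def ker (x : EuclideanSpace ℝ (Fin 8)) (z : ℂ) : ℂ :=
  Complex.exp (Real.pi * I * (‖x‖ : ℂ) ^ 2 * z)

/-- Viazovska's function `a : ℝ⁸ → ℂ`, defined by contour integrals of `φ₀`: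
the first contour runs from `-1` vertically to `-1 + i` then horizontally to `i`, the second
from `1` vertically to `1 + i` then horizontally to `i`, the third along the imaginary axis
from `0` to `i`, and the fourth along the imaginary axis from `i` to `i∞`. -/
noncomputable def funA (x : EuclideanSpace ℝ (Fin 8)) : ℂ :=
  (segInt (fun z => φ₀ (-1 / (z + 1)) * (z + 1) ^ 2 * ker x z) (-1) (-1 + I) +
    segInt (fun z => φ₀ (-1 / (z + 1)) * (z + 1) ^ 2 * ker x z) (-1 + I) I) +
  (segInt (fun z => φ₀ (-1 / (z - 1)) * (z - 1) ^ 2 * ker x z) 1 (1 + I) +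
    segInt (fun z => φ₀ (-1 / (z - 1)) * (z - 1) ^ 2 * ker x z) (1 + I) I) -
  2 * segInt (fun z => φ₀ (-1 / z) * z ^ 2 * ker x z) 0 I +
  2 * imAxisRayInt (fun z => φ₀ z * ker x z) 1

/-- Viazovska's function `b : ℝ⁸ → ℂ`, defined by contour integrals of `ψ_S` along the same
contours as `funA`, with a minus sign on the ray from `i` to `i∞`. -/
noncomputable def funB (x : EuclideanSpace ℝ (Fin 8)) : ℂ :=
  (segInt (fun z => ψS (-1 / (z + 1)) * (z + 1) ^ 2 * ker x z) (-1) (-1 + I) +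
    segInt (fun z => ψS (-1 / (z + 1)) * (z + 1) ^ 2 * ker x z) (-1 + I) I) +
  (segInt (fun z => ψS (-1 / (z - 1)) * (z - 1) ^ 2 * ker x z) 1 (1 + I) +
    segInt (fun z => ψS (-1 / (z - 1)) * (z - 1) ^ 2 * ker x z) (1 + I) I) -
  2 * segInt (fun z => ψS (-1 / z) * z ^ 2 * ker x z) 0 I -
  2 * imAxisRayInt (fun z => ψS z * ker x z) 1

open scoped FourierTransform

/-! ### The modular forms -/

section ModularForms

open Filter Topology

lemma cexp_nat_mul (n : ℕ) (z : ℂ) :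
    cexp (2 * π * I * n * z) = cexp (2 * π * I * z) ^ n := by
  rw [← Complex.exp_nat_mul]; congr 1; ring

lemma E₂_coe (z : UpperHalfPlane) : E₂ z = EisensteinSeries.E2 z := by
  rw [EisensteinSeries.E2_eq_tsum_cexp, E₂]
  simp only [cexp_nat_mul]

lemma E₄_coe (z : UpperHalfPlane) : E₄ z = ModularForm.E₄ z := by
  rw [EisensteinSeries.q_expansion_bernoulli _ (by decide), E₄]
  simp only [cexp_nat_mul, zpow_natCast]
  have : bernoulli 4 = -1 / 30 := by
    rw [bernoulli_eq_bernoulli'_of_ne_one (by norm_num), bernoulli'_four]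
  rw [this]
  push_cast
  norm_num

lemma E₆_coe (z : UpperHalfPlane) : E₆ z = ModularForm.E₆ z := by
  rw [EisensteinSeries.q_expansion_bernoulli _ (by decide), E₆]
  simp only [cexp_nat_mul, zpow_natCast]
  have : bernoulli 6 = 1 / 42 := by
    rw [bernoulli_eq_bernoulli'_of_ne_one (by norm_num), bernoulli'_def]
    have h5 : bernoulli' 5 = 0 := bernoulli'_eq_zero_of_odd (by decide) (by norm_num)
    norm_num [Finset.sum_range_succ, bernoulli'_four, h5, Nat.choose]
  rw [this]
  push_cast
  norm_num

lemma Δ_coe (z : UpperHalfPlane) : Δ z = ModularForm.discriminant z := by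
  rw [Δ, E₄_coe, E₆_coe, ModularForm.discriminant_eq_E₄_cube_sub_E₆_sq]

lemma Δ_ne_zero {z : ℂ} (hz : 0 < z.im) : Δ z ≠ 0 := by
  have := Δ_coe ⟨z, hz⟩
  change Δ z = _ at this
  rw [this]
  exact ModularForm.discriminant_ne_zero _

lemma differentiableOn_of_coe {f : ℂ → ℂ} {g : UpperHalfPlane → ℂ}
    (hg : DifferentiableOn ℂ (g ∘ UpperHalfPlane.ofComplex) {z | 0 < z.im})
    (h : ∀ z : UpperHalfPlane, f z = g z) : DifferentiableOn ℂ f {z | 0 < z.im} := by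
  refine hg.congr fun z hz => ?_
  rw [Function.comp_apply, ← h, UpperHalfPlane.ofComplex_apply_of_im_pos hz]

lemma differentiableOn_φ₀ : DifferentiableOn ℂ φ₀ {z | 0 < z.im} := by
  have h2 : DifferentiableOn ℂ E₂ {z | 0 < z.im} :=
    differentiableOn_of_coe (UpperHalfPlane.mdifferentiable_iff.1 E2_mdifferentiable) E₂_coe
  have h4 : DifferentiableOn ℂ E₄ {z | 0 < z.im} :=
    differentiableOn_of_coe
      (UpperHalfPlane.mdifferentiable_iff.1 (ModularFormClass.holo ModularForm.E₄)) E₄_coe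
  have h6 : DifferentiableOn ℂ E₆ {z | 0 < z.im} :=
    differentiableOn_of_coe
      (UpperHalfPlane.mdifferentiable_iff.1 (ModularFormClass.holo ModularForm.E₆)) E₆_coe
  exact (((h2.mul h4).sub h6).pow 2).div (((h4.pow 3).sub (h6.pow 2)).div_const 1728)
    fun z hz => Δ_ne_zero hz

lemma φ₀_add_one (z : ℂ) : φ₀ (z + 1) = φ₀ z := by
  have h (n : ℕ) : cexp (2 * π * I * n * (z + 1)) = cexp (2 * π * I * n * z) := by
    rw [show 2 * π * I * n * (z + 1) = 2 * π * I * n * z + n * (2 * π * I) by ring]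
    exact Complex.exp_periodic.nat_mul n _
  simp only [φ₀, Δ, E₂, E₄, E₆, h]

/-- A `q`-series `∑ σₖ(n) qⁿ` without constant term is `O(q)`, uniformly for `Im z ≥ 1 / 2`. -/
lemma exists_norm_tsum_sigma_le (k : ℕ) : ∃ C, 0 ≤ C ∧ ∀ z : ℂ, 1 / 2 ≤ z.im →
    ‖∑' n : ℕ+, (ArithmeticFunction.sigma k (n : ℕ) : ℂ) * cexp (2 * π * I * (n : ℕ) * z)‖ ≤
      C * Real.exp (-2 * π * z.im) := by
  have hs : Summable fun n : ℕ => (n : ℝ) ^ (k + 1) * Real.exp (-π) ^ n :=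
    summable_pow_mul_geometric_of_norm_lt_one _ (by simp [Real.pi_pos])
  have hs' : Summable fun n : ℕ+ => ((n : ℕ) : ℝ) ^ (k + 1) * Real.exp (-π) ^ (n : ℕ) :=
    hs.comp_injective PNat.coe_injective
  refine ⟨(∑' n : ℕ+, ((n : ℕ) : ℝ) ^ (k + 1) * Real.exp (-π) ^ (n : ℕ)) * Real.exp π, by positivity,
    fun z hz => tsum_of_norm_bounded ((hs'.hasSum.mul_right (Real.exp π)).mul_right _) fun n => ?_⟩
  have h1 : (ArithmeticFunction.sigma k (n : ℕ) : ℝ) ≤ ((n : ℕ) : ℝ) ^ (k + 1) := by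
    exact_mod_cast ArithmeticFunction.sigma_le_pow_succ k n
  have hn : (1 : ℝ) ≤ (n : ℕ) := by exact_mod_cast n.pos
  rw [norm_mul, Complex.norm_natCast, Complex.norm_exp, ← Real.exp_nat_mul,
    mul_assoc (((n : ℕ) : ℝ) ^ (k + 1)), ← Real.exp_add, mul_assoc (((n : ℕ) : ℝ) ^ (k + 1)),
    ← Real.exp_add]
  refine mul_le_mul h1 (Real.exp_le_exp.2 ?_) (Real.exp_pos _).le (by positivity)
  have : (2 * (π : ℂ) * I * (n : ℕ) * z).re = -2 * π * (n : ℕ) * z.im := by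
    simp
  rw [this]
  nlinarith [mul_nonneg (mul_nonneg Real.pi_pos.le (sub_nonneg.2 hn)) (sub_nonneg.2 hz)]

/-- The constant terms of `E₂E₄` and `E₆` cancel, so the difference is `O(q)`. -/
lemma exists_norm_num_le : ∃ C, 0 ≤ C ∧ ∀ z : ℂ, 1 / 2 ≤ z.im →
    ‖E₂ z * E₄ z - E₆ z‖ ≤ C * Real.exp (-2 * π * z.im) := by
  obtain ⟨C₁, h₁, H₁⟩ := exists_norm_tsum_sigma_le 1
  obtain ⟨C₃, h₃, H₃⟩ := exists_norm_tsum_sigma_le 3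
  obtain ⟨C₅, h₅, H₅⟩ := exists_norm_tsum_sigma_le 5
  refine ⟨240 * C₃ + 24 * C₁ + 24 * C₁ * (240 * C₃) + 504 * C₅, by positivity, fun z hz => ?_⟩
  specialize H₁ z hz
  specialize H₃ z hz
  specialize H₅ z hz
  rw [E₂, E₄, E₆]
  set a := ∑' n : ℕ+, (ArithmeticFunction.sigma 1 (n : ℕ) : ℂ) * cexp (2 * π * I * (n : ℕ) * z)
  set b := ∑' n : ℕ+, (ArithmeticFunction.sigma 3 (n : ℕ) : ℂ) * cexp (2 * π * I * (n : ℕ) * z)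
  set c := ∑' n : ℕ+, (ArithmeticFunction.sigma 5 (n : ℕ) : ℂ) * cexp (2 * π * I * (n : ℕ) * z)
  set e := Real.exp (-2 * π * z.im)
  have he : 0 ≤ e := (Real.exp_pos _).le
  have he1 : e ≤ 1 := Real.exp_le_one_iff.2 (by nlinarith [Real.pi_pos])
  have hab : ‖a‖ * ‖b‖ ≤ C₁ * C₃ * e := by
    calc ‖a‖ * ‖b‖ ≤ (C₁ * e) * (C₃ * e) := by gcongr
      _ = C₁ * C₃ * e * e := by ring
      _ ≤ C₁ * C₃ * e * 1 := by gcongr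
      _ = _ := by ring
  calc ‖(1 - 24 * a) * (1 + 240 * b) - (1 - 504 * c)‖
      = ‖240 * b - 24 * a - 24 * 240 * (a * b) + 504 * c‖ := by congr 1; ring
    _ ≤ ‖240 * b‖ + ‖24 * a‖ + ‖24 * 240 * (a * b)‖ + ‖504 * c‖ :=
      norm_add_le_of_le (norm_sub_le_of_le (norm_sub_le _ _) le_rfl) le_rfl
    _ = 240 * ‖b‖ + 24 * ‖a‖ + 24 * 240 * (‖a‖ * ‖b‖) + 504 * ‖c‖ := by
      simp only [norm_mul, Complex.norm_ofNat]
    _ ≤ _ := by linarith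

lemma continuousOn_φ₀ : ContinuousOn φ₀ {z | 0 < z.im} := differentiableOn_φ₀.continuousOn

/-- The numerator of `φ₀` is `O(q²)` and `Δ` is of exact order `q`, so `φ₀ = O(q)` at `i∞`; on the
remaining compact part of the strip `φ₀` is bounded by continuity. -/
lemma exists_norm_φ₀_le : ∃ C, 0 ≤ C ∧ ∀ z : ℂ, |z.re| ≤ 1 → 1 / 2 ≤ z.im →
    ‖φ₀ z‖ ≤ C * Real.exp (-2 * π * z.im) := by
  obtain ⟨C, hC, H⟩ := exists_norm_num_le
  obtain ⟨c, hc0, hc⟩ := ModularForm.exp_isBigO_discriminant.exists_pos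
  obtain ⟨A, hA⟩ := (UpperHalfPlane.atImInfty_mem _).1 hc.bound
  have hK : IsCompact (Set.Icc (-1 : ℝ) 1 ×ℂ Set.Icc (1 / 2 : ℝ) A) :=
    isCompact_Icc.reProdIm isCompact_Icc
  obtain ⟨B, hB⟩ := hK.exists_bound_of_continuousOn (continuousOn_φ₀.mono (by
    intro z hz
    have := (mem_reProdIm.1 hz).2.1
    simp only [Set.mem_ofPred_eq]
    linarith))
  refine ⟨C ^ 2 * c + |B| * Real.exp (2 * π * A), by positivity, fun z hz1 hz2 => ?_⟩
  have hz0 : 0 < z.im := by linarith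
  set e := Real.exp (-2 * π * z.im) with he
  have hep : 0 < e := Real.exp_pos _
  rcases le_total A z.im with hAz | hAz
  · have h1 : e ≤ c * ‖Δ z‖ := by
      have := hA ⟨z, hz0⟩ hAz
      rw [Set.mem_ofPred_eq, ← Δ_coe, Real.norm_of_nonneg (Real.exp_pos _).le] at this
      exact this
    have h2 := H z hz2
    have hD : 0 < ‖Δ z‖ := norm_pos_iff.2 (Δ_ne_zero hz0)
    have h3 : ‖φ₀ z‖ ≤ C ^ 2 * c * e := by
      rw [φ₀, norm_div, norm_pow, div_le_iff₀ hD]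
      calc ‖E₂ z * E₄ z - E₆ z‖ ^ 2 ≤ (C * e) ^ 2 := by gcongr
        _ = C ^ 2 * e * e := by ring
        _ ≤ C ^ 2 * e * (c * ‖Δ z‖) := by gcongr
        _ = _ := by ring
    have : 0 ≤ |B| * Real.exp (2 * π * A) * e := by positivity
    linarith
  · have h1 : ‖φ₀ z‖ ≤ B := hB z (mem_reProdIm.2 ⟨abs_le.1 hz1, hz2, hAz⟩)
    have h2 : 1 ≤ Real.exp (2 * π * A) * e := by
      rw [he, ← Real.exp_add]
      exact Real.one_le_exp (by nlinarith [Real.pi_pos])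
    have h3 : |B| * 1 ≤ |B| * (Real.exp (2 * π * A) * e) := by gcongr
    have h4 : 0 ≤ C ^ 2 * c * e := by positivity
    linarith [le_abs_self B]

end ModularForms

/-! ### Superpositions of Gaussians and their Fourier transforms -/

section Gauss

open MeasureTheory Set

/-- The superposition `∫_{t > c} g(t) e^{πi‖x‖²z(t)} dt` of Gaussians with parameters `z(t)`. -/
noncomputable def gaussInt (c : ℝ) (g z : ℝ → ℂ) (x : EuclideanSpace ℝ (Fin 8)) : ℂ :=
  ∫ t in Ioi c, g t * ker x (z t)

/-- Conditions on a weight `g` and a path `z` in the upper half-plane under which `gaussInt c g z`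
can be handled: `g` decays like `e^{-2πt}` and `z` approaches the real line at most like `1/t`. -/
structure Admissible (c : ℝ) (g z : ℝ → ℂ) : Prop where
  pos : 0 < c
  g_cont : ContinuousOn g (Ioi c)
  z_cont : ContinuousOn z (Ioi c)
  g_le : ∃ C, 0 ≤ C ∧ ∀ t, c < t → ‖g t‖ ≤ C * Real.exp (-2 * π * t)
  im_ge : ∃ δ, 0 < δ ∧ ∀ t, c < t → δ / t ≤ (z t).im

lemma integrableOn_pow_mul_exp {c : ℝ} (hc : 0 < c) (n : ℕ) :
    IntegrableOn (fun t : ℝ => t ^ n * Real.exp (-2 * π * t)) (Ioi c) := by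
  have := integrableOn_rpow_mul_exp_neg_mul_rpow (s := n) (p := 1) (b := 2 * π)
    (by linarith [Nat.cast_nonneg (α := ℝ) n]) one_pos (by positivity)
  refine (this.mono_set (Ioi_subset_Ioi hc.le)).congr_fun (fun t _ => ?_) measurableSet_Ioi
  simp

lemma norm_ker (x : EuclideanSpace ℝ (Fin 8)) (w : ℂ) :
    ‖ker x w‖ = Real.exp (-(π * w.im) * ‖x‖ ^ 2) := by
  rw [ker, Complex.norm_exp]
  congr 1
  have : (π : ℂ) * I * (‖x‖ : ℂ) ^ 2 * w = ((π * ‖x‖ ^ 2 : ℝ) : ℂ) * (I * w) := by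
    push_cast; ring
  rw [this, Complex.re_ofReal_mul, Complex.I_mul_re]
  ring

lemma ker_eq (x : EuclideanSpace ℝ (Fin 8)) (w : ℂ) :
    ker x w = cexp (-(-π * I * w) * (‖x‖ : ℂ) ^ 2) := by
  rw [ker]; congr 1; ring

lemma re_param (w : ℂ) : (-π * I * w).re = π * w.im := by simp

/-- The Fourier transform of the Gaussian `e^{πi‖x‖²w}` on `ℝ⁸` is `w⁻⁴ e^{πi‖ξ‖²(-1/w)}`. -/
lemma fourier_ker {w : ℂ} (hw : 0 < w.im) (ξ : EuclideanSpace ℝ (Fin 8)) :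
    𝓕 (fun x : EuclideanSpace ℝ (Fin 8) => ker x w) ξ = w⁻¹ ^ 4 * ker ξ (-1 / w) := by
  have hw0 : w ≠ 0 := by rintro rfl; simp at hw
  have hb : 0 < (-π * I * w).re := by rw [re_param]; positivity
  simp only [ker_eq]
  rw [fourier_gaussian_innerProductSpace hb]
  have h4 : ((Module.finrank ℝ (EuclideanSpace ℝ (Fin 8)) : ℂ) / 2) = ((4 : ℕ) : ℂ) := by
    simp; norm_num
  rw [h4, Complex.cpow_natCast]
  have hπ : (π : ℂ) ≠ 0 := by exact_mod_cast Real.pi_ne_zero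
  congr 1
  · have : (π : ℂ) / (-π * I * w) = I * w⁻¹ := by
      field_simp
      simp
    rw [this, mul_pow, I_pow_four, one_mul]
  · congr 1
    field_simp
    simp

lemma integrable_ker {w : ℂ} (hw : 0 < w.im) :
    Integrable (fun x : EuclideanSpace ℝ (Fin 8) => ker x w) := by
  have hb : 0 < (-π * I * w).re := by rw [re_param]; positivity
  have := GaussianFourier.integrable_cexp_neg_mul_sq_norm_add hb 0
    (0 : EuclideanSpace ℝ (Fin 8))
  simpa [ker_eq] using this

lemma integral_norm_ker {w : ℂ} (hw : 0 < w.im) :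
    ∫ x : EuclideanSpace ℝ (Fin 8), ‖ker x w‖ = (1 / w.im) ^ 4 := by
  simp only [norm_ker]
  rw [GaussianFourier.integral_rexp_neg_mul_sq_norm (by positivity)]
  have h4 : ((Module.finrank ℝ (EuclideanSpace ℝ (Fin 8)) : ℝ) / 2) = ((4 : ℕ) : ℝ) := by
    simp; norm_num
  rw [h4, Real.rpow_natCast]
  congr 1
  field_simp

lemma continuous_ker : Continuous fun p : EuclideanSpace ℝ (Fin 8) × ℂ => ker p.1 p.2 := by
  unfold ker
  fun_prop

lemma Admissible.im_pos {c : ℝ} {g z : ℝ → ℂ} (h : Admissible c g z) {t : ℝ} (ht : c < t) :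
    0 < (z t).im := by
  obtain ⟨δ, hδ, H⟩ := h.im_ge
  exact (div_pos hδ (h.pos.trans ht)).trans_le (H t ht)

/-- Absolute integrability of the double integral behind Fubini: the inner `L¹`-norm is
`‖g(t)‖ / (Im z(t))⁴`, which is `O(t⁴ e^{-2πt})`. -/
lemma Admissible.integrable_prod {c : ℝ} {g z : ℝ → ℂ} (h : Admissible c g z) :
    Integrable (fun p : EuclideanSpace ℝ (Fin 8) × ℝ => g p.2 * ker p.1 (z p.2))
      (volume.prod (volume.restrict (Ioi c))) := by
  have hg : AEStronglyMeasurable g (volume.restrict (Ioi c)) :=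
    h.g_cont.aestronglyMeasurable measurableSet_Ioi
  have hz : AEStronglyMeasurable z (volume.restrict (Ioi c)) :=
    h.z_cont.aestronglyMeasurable measurableSet_Ioi
  have hm : AEStronglyMeasurable
      (fun p : EuclideanSpace ℝ (Fin 8) × ℝ => g p.2 * ker p.1 (z p.2))
      (volume.prod (volume.restrict (Ioi c))) := by
    have h1 : AEStronglyMeasurable (fun p : EuclideanSpace ℝ (Fin 8) × ℝ => p.1)
        (volume.prod (volume.restrict (Ioi c))) := continuous_fst.aestronglyMeasurable
    have h2 := continuous_ker.comp_aestronglyMeasurable (h1.prodMk hz.comp_snd)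
    exact hg.comp_snd.mul h2
  obtain ⟨C, hC0, hC⟩ := h.g_le
  obtain ⟨δ, hδ, H⟩ := h.im_ge
  have h1 : ∀ᵐ t ∂volume.restrict (Ioi c),
      Integrable (fun x : EuclideanSpace ℝ (Fin 8) => g t * ker x (z t)) :=
    ae_restrict_of_forall_mem measurableSet_Ioi fun t ht =>
      (integrable_ker (h.im_pos ht)).const_mul (g t)
  have h2 : AEStronglyMeasurable
      (fun t => ∫ x : EuclideanSpace ℝ (Fin 8), ‖g t * ker x (z t)‖)
      (volume.restrict (Ioi c)) := hm.norm.prod_swap.integral_prod_right'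
  refine (integrable_prod_iff' hm).2 ⟨h1, ?_⟩
  refine ((integrableOn_pow_mul_exp h.pos 4).const_mul (C * (1 / δ) ^ 4)).mono' h2
    (ae_restrict_of_forall_mem measurableSet_Ioi fun t ht => ?_)
  have ht0 : 0 < t := h.pos.trans ht
  have hi := h.im_pos ht
  simp only [norm_mul]
  rw [integral_const_mul, integral_norm_ker hi, Real.norm_of_nonneg (by positivity)]
  have h1 : 1 / (z t).im ≤ t / δ := by
    rw [one_div_le hi (by positivity), one_div_div]
    exact H t ht
  calc ‖g t‖ * (1 / (z t).im) ^ 4 ≤ C * Real.exp (-2 * π * t) * (t / δ) ^ 4 := by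
        gcongr
        exact hC t ht
    _ = _ := by ring

/-- The Fourier transform acts on superpositions of Gaussians by `z ↦ -1/z` and
`g ↦ g z⁻⁴`. -/
lemma Admissible.fourier_gaussInt {c : ℝ} {g z : ℝ → ℂ} (h : Admissible c g z) :
    𝓕 (gaussInt c g z) = gaussInt c (fun t => g t * (z t)⁻¹ ^ 4) (fun t => -1 / z t) := by
  ext ξ
  rw [Real.fourier_eq]
  unfold gaussInt
  simp_rw [Circle.smul_def, ← integral_smul]
  rw [integral_integral_swap]
  · refine setIntegral_congr_fun measurableSet_Ioi fun t ht => ?_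
    have := fourier_ker (h.im_pos ht) ξ
    rw [Real.fourier_eq] at this
    simp only [mul_assoc]
    rw [← this, ← integral_const_mul]
    congr 1
    ext v
    simp only [Circle.smul_def, smul_eq_mul]
    ring
  · refine h.integrable_prod.mono ?_ (.of_forall fun p => ?_)
    · have hc : Continuous fun p : EuclideanSpace ℝ (Fin 8) × ℝ =>
          ((𝐞 (-inner ℝ p.1 ξ) : Circle) : ℂ) := by fun_prop
      exact hc.aestronglyMeasurable.smul h.integrable_prod.1
    · simp only [Function.uncurry, norm_smul, Circle.norm_coe, one_mul, le_refl]

/-! ### Superpositions of Gaussians as Schwartz functions -/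

/-- The `n`-th derivative in `s` of the radial profile `∫_{t > c} g(t) e^{πi s z(t)} dt`. -/
noncomputable def prof (c : ℝ) (g z : ℝ → ℂ) (n : ℕ) (s : ℝ) : ℂ :=
  ∫ t in Ioi c, g t * (π * I * z t) ^ n * cexp (π * I * z t * s)

lemma norm_prof_integrand_le {C z' : ℝ} {n : ℕ} {g z : ℂ} {s : ℝ} (hg : ‖g‖ ≤ C) (hC : 0 ≤ C)
    (hz : ‖z‖ ≤ 1) (hs : -(s * z.im) ≤ z') :
    ‖g * (π * I * z) ^ n * cexp (π * I * z * s)‖ ≤ C * π ^ n * Real.exp (π * z') := by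
  have hre : (π * I * z * s).re = π * -(s * z.im) := by simp; ring
  rw [norm_mul, norm_mul, norm_pow, norm_mul, norm_mul, norm_I, mul_one, Complex.norm_exp, hre,
    Complex.norm_of_nonneg Real.pi_pos.le]
  have : (π * ‖z‖) ^ n ≤ π ^ n := by
    gcongr
    nlinarith [Real.pi_pos, norm_nonneg z]
  gcongr

lemma Admissible.aesm {c : ℝ} {g z : ℝ → ℂ} (h : Admissible c g z) (n : ℕ) (s : ℝ) :
    AEStronglyMeasurable (fun t => g t * (π * I * z t) ^ n * cexp (π * I * z t * s))
      (volume.restrict (Ioi c)) := by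
  have h1 := h.g_cont
  have h2 := h.z_cont
  refine ContinuousOn.aestronglyMeasurable ?_ measurableSet_Ioi
  fun_prop

lemma Admissible.integrableOn_exp {c : ℝ} {g z : ℝ → ℂ} (h : Admissible c g z) (K : ℝ) :
    IntegrableOn (fun t : ℝ => K * Real.exp (-2 * π * t)) (Ioi c) := by
  have := (integrableOn_pow_mul_exp h.pos 0).const_mul K
  simp only [pow_zero, one_mul] at this
  exact this

lemma Admissible.hasDerivAt_prof {c : ℝ} {g z : ℝ → ℂ} (h : Admissible c g z)
    (hz : ∀ t, c < t → ‖z t‖ ≤ 1) (n : ℕ) (s : ℝ) :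
    HasDerivAt (prof c g z n) (prof c g z (n + 1) s) s := by
  obtain ⟨C, hC0, hC⟩ := h.g_le
  have key : ∀ m : ℕ, ∀ t ∈ Ioi c, ∀ r ∈ Metric.ball s 1,
      ‖g t * (π * I * z t) ^ m * cexp (π * I * z t * r)‖ ≤
        C * π ^ m * Real.exp (π * (|s| + 1)) * Real.exp (-2 * π * t) := by
    intro m t ht r hr
    have hr' : |r| ≤ |s| + 1 := by
      have := abs_sub_abs_le_abs_sub r s
      rw [Metric.mem_ball, Real.dist_eq] at hr
      linarith
    have h1 : -(r * (z t).im) ≤ |s| + 1 := by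
      refine (neg_le_abs _).trans ?_
      rw [abs_mul]
      have := (abs_im_le_norm (z t)).trans (hz t ht)
      nlinarith [abs_nonneg r, abs_nonneg (z t).im]
    refine (norm_prof_integrand_le (hC t ht) (by positivity) (hz t ht) h1).trans_eq ?_
    ring
  have hsb : s ∈ Metric.ball s 1 := Metric.mem_ball_self one_pos
  refine (hasDerivAt_integral_of_dominated_loc_of_deriv_le
    (F' := fun (r : ℝ) t => g t * (π * I * z t) ^ (n + 1) * cexp (π * I * z t * r))
    (Metric.ball_mem_nhds s one_pos) (.of_forall fun r => h.aesm n r)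
    ((h.integrableOn_exp _).mono' (h.aesm n s)
      (ae_restrict_of_forall_mem measurableSet_Ioi fun t ht => key n t ht s hsb))
    (h.aesm (n + 1) s)
    (ae_restrict_of_forall_mem measurableSet_Ioi fun t ht => key (n + 1) t ht)
    (h.integrableOn_exp _) (.of_forall fun t r _ => ?_)).2
  have h1 : HasDerivAt (fun r : ℝ => π * I * z t * (r : ℂ)) (π * I * z t) r := by
    simpa using (Complex.ofRealCLM.hasDerivAt (x := r)).const_mul (π * I * z t)
  refine (h1.cexp.const_mul (g t * (π * I * z t) ^ n)).congr_deriv ?_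
  ring

lemma Admissible.iteratedDeriv_prof {c : ℝ} {g z : ℝ → ℂ} (h : Admissible c g z)
    (hz : ∀ t, c < t → ‖z t‖ ≤ 1) (n : ℕ) :
    iteratedDeriv n (prof c g z 0) = prof c g z n := by
  induction n with
  | zero => simp
  | succ n ih =>
    rw [iteratedDeriv_succ, ih]
    ext s
    exact (h.hasDerivAt_prof hz n s).deriv

/-- Rapid decay of the profile on `[0, ∞)`: `s^k e^{-πsδ/t}` is at most a multiple of `t^k`, and
all moments of `e^{-2πt}` are finite. -/
lemma Admissible.pow_mul_prof_le {c : ℝ} {g z : ℝ → ℂ} (h : Admissible c g z)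
    (hz : ∀ t, c < t → ‖z t‖ ≤ 1) (n k : ℕ) :
    ∃ K, ∀ s, 0 ≤ s → s ^ k * ‖prof c g z n s‖ ≤ K := by
  obtain ⟨C, hC0, hC⟩ := h.g_le
  obtain ⟨δ, hδ, hi⟩ := h.im_ge
  set M : ℝ := C * π ^ n * (k.factorial / (π * δ) ^ k) with hM
  refine ⟨∫ t in Ioi c, M * (t ^ k * Real.exp (-2 * π * t)), fun s hs => ?_⟩
  rw [prof]
  have : s ^ k = ‖((s ^ k : ℝ) : ℂ)‖ := (Complex.norm_of_nonneg (by positivity)).symm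
  rw [this, ← norm_mul, ← integral_const_mul]
  refine norm_integral_le_of_norm_le ((integrableOn_pow_mul_exp h.pos k).const_mul M)
    (ae_restrict_of_forall_mem measurableSet_Ioi fun t ht => ?_)
  have ht0 : 0 < t := h.pos.trans ht
  rw [norm_mul, ← this]
  have h1 : -(s * (z t).im) ≤ -(s * (δ / t)) := by
    have := hi t ht
    gcongr
  have h2 := norm_prof_integrand_le (n := n) (hC t ht) (by positivity) (hz t ht) h1
  have h3 : s ^ k * Real.exp (π * -(s * (δ / t))) ≤ k.factorial / (π * δ) ^ k * t ^ k := by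
    have h4 := Real.pow_div_factorial_le_exp (π * s * (δ / t)) (by positivity) k
    have h5 : π * -(s * (δ / t)) = -(π * s * (δ / t)) := by ring
    rw [h5, Real.exp_neg, ← div_eq_mul_inv, div_le_iff₀ (Real.exp_pos _)]
    refine le_trans (le_of_eq ?_) (mul_le_mul_of_nonneg_left h4 (by positivity))
    have : (k.factorial : ℝ) ≠ 0 := by positivity
    have h6 : π * s * (δ / t) = (π * δ) * s / t := by ring
    rw [h6, div_pow]
    field_simp
    ring
  calc s ^ k * ‖g t * (π * I * z t) ^ n * cexp (π * I * z t * s)‖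
      ≤ s ^ k * (C * Real.exp (-2 * π * t) * π ^ n * Real.exp (π * -(s * (δ / t)))) := by gcongr
    _ = C * Real.exp (-2 * π * t) * π ^ n * (s ^ k * Real.exp (π * -(s * (δ / t)))) := by ring
    _ ≤ C * Real.exp (-2 * π * t) * π ^ n * (k.factorial / (π * δ) ^ k * t ^ k) := by gcongr
    _ = _ := by rw [hM]; ring

lemma Admissible.one_add_pow_mul_prof_le {c : ℝ} {g z : ℝ → ℂ} (h : Admissible c g z)
    (hz : ∀ t, c < t → ‖z t‖ ≤ 1) (n k : ℕ) :
    ∃ K, ∀ i ≤ n, ∀ s, 0 ≤ s → (1 + s) ^ k * ‖prof c g z i s‖ ≤ K := by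
  choose K hK using fun i j => h.pow_mul_prof_le hz i j
  refine ⟨∑ i ∈ Finset.range (n + 1), |2 ^ (k - 1) * (K i 0 + K i k)|, fun i hi s hs => ?_⟩
  refine le_trans ?_ (Finset.single_le_sum
    (f := fun i => |2 ^ (k - 1) * (K i 0 + K i k)|) (fun _ _ => abs_nonneg _)
    (Finset.mem_range.2 (Nat.lt_succ_of_le hi)))
  refine le_trans ?_ (le_abs_self _)
  have h1 := add_pow_le zero_le_one hs k
  have h2 := hK i 0 s hs
  have h3 := hK i k s hs
  rw [pow_zero, one_mul] at h2
  rw [one_pow] at h1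
  calc (1 + s) ^ k * ‖prof c g z i s‖ ≤ 2 ^ (k - 1) * (1 + s ^ k) * ‖prof c g z i s‖ := by gcongr
    _ = 2 ^ (k - 1) * (‖prof c g z i s‖ + s ^ k * ‖prof c g z i s‖) := by ring
    _ ≤ _ := by gcongr

lemma gaussInt_eq_prof (c : ℝ) (g z : ℝ → ℂ) :
    gaussInt c g z = prof c g z 0 ∘ fun x => ‖x‖ ^ 2 := by
  ext x
  simp only [gaussInt, prof, Function.comp, ker, pow_zero, mul_one]
  congr 1
  ext t
  push_cast
  congr 2
  ring

lemma Admissible.contDiff_prof {c : ℝ} {g z : ℝ → ℂ} (h : Admissible c g z)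
    (hz : ∀ t, c < t → ‖z t‖ ≤ 1) : ContDiff ℝ ((⊤ : ℕ∞) : WithTop ℕ∞) (prof c g z 0) := by
  refine contDiff_of_differentiable_iteratedDeriv fun m _ => ?_
  rw [h.iteratedDeriv_prof hz]
  exact fun s => (h.hasDerivAt_prof hz m s).differentiableAt

/-- A superposition of Gaussians along an admissible path in the unit disc is a Schwartz
function. -/
lemma Admissible.exists_schwartz {c : ℝ} {g z : ℝ → ℂ} (h : Admissible c g z)
    (hz : ∀ t, c < t → ‖z t‖ ≤ 1) :
    ∃ S : SchwartzMap (EuclideanSpace ℝ (Fin 8)) ℂ, ⇑S = gaussInt c g z := by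
  have hsq : ContDiff ℝ ((⊤ : ℕ∞) : WithTop ℕ∞)
      (fun x : EuclideanSpace ℝ (Fin 8) => ‖x‖ ^ 2) := contDiff_norm_sq ℝ
  refine ⟨⟨gaussInt c g z, ?_, fun k n => ?_⟩, rfl⟩
  · rw [gaussInt_eq_prof]
    exact (h.contDiff_prof hz).comp hsq
  · have htg : Function.HasTemperateGrowth (fun x : EuclideanSpace ℝ (Fin 8) => ‖x‖ ^ 2) := by
      fun_prop
    obtain ⟨k₀, C₀, hC₀, hC⟩ := htg.norm_iteratedFDeriv_le_uniform n
    -- the chain rule costs a factor `(1 + ‖x‖) ^ (k₀ * n)`, so the profile has to beat the power `N`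
    set N := k + k₀ * n with hN
    obtain ⟨K, hK⟩ := h.one_add_pow_mul_prof_le hz n N
    refine ⟨n.factorial * (max C₀ 1) ^ n * 2 ^ N * K, fun x => ?_⟩
    have hx := norm_nonneg x
    have hs : 0 < 1 + ‖x‖ ^ 2 := by positivity
    have h1 : ∀ i ≤ n, ‖iteratedFDeriv ℝ i (prof c g z 0) (‖x‖ ^ 2)‖ ≤ K / (1 + ‖x‖ ^ 2) ^ N := by
      intro i hi
      rw [norm_iteratedFDeriv_eq_norm_iteratedDeriv, h.iteratedDeriv_prof hz,
        le_div_iff₀ (by positivity), mul_comm]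
      exact hK i hi _ (by positivity)
    have hD1 : 1 ≤ max C₀ 1 * (1 + ‖x‖) ^ k₀ :=
      one_le_mul_of_one_le_of_one_le (le_max_right _ _) (one_le_pow₀ (by linarith))
    have h2 : ∀ i, 1 ≤ i → i ≤ n →
        ‖iteratedFDeriv ℝ i (fun x : EuclideanSpace ℝ (Fin 8) => ‖x‖ ^ 2) x‖ ≤
          (max C₀ 1 * (1 + ‖x‖) ^ k₀) ^ i := by
      intro i h1i hin
      refine (hC i hin x).trans (le_trans ?_ (le_self_pow₀ hD1 (by omega)))
      gcongr
      exact le_max_left _ _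
    have h3 := norm_iteratedFDeriv_comp_le (h.contDiff_prof hz) hsq
      (by exact_mod_cast le_top) x h1 h2
    rw [gaussInt_eq_prof]
    have hKn : 0 ≤ K := le_trans (by positivity) (hK 0 (Nat.zero_le _) 0 le_rfl)
    have h4 : ‖x‖ ^ k * ((1 + ‖x‖) ^ k₀) ^ n ≤ 2 ^ N * (1 + ‖x‖ ^ 2) ^ N := by
      calc ‖x‖ ^ k * ((1 + ‖x‖) ^ k₀) ^ n ≤ (1 + ‖x‖) ^ k * ((1 + ‖x‖) ^ k₀) ^ n := by
            gcongr; linarith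
        _ = (1 + ‖x‖) ^ N := by rw [hN, pow_add, pow_mul]
        _ ≤ (2 * (1 + ‖x‖ ^ 2)) ^ N := by
            gcongr
            nlinarith [sq_nonneg (‖x‖ - 1)]
        _ = _ := mul_pow _ _ _
    calc ‖x‖ ^ k * ‖iteratedFDeriv ℝ n (prof c g z 0 ∘ fun x => ‖x‖ ^ 2) x‖
        ≤ ‖x‖ ^ k * (n.factorial * (K / (1 + ‖x‖ ^ 2) ^ N) *
            (max C₀ 1 * (1 + ‖x‖) ^ k₀) ^ n) := by gcongr
      _ = n.factorial * (max C₀ 1) ^ n * (K / (1 + ‖x‖ ^ 2) ^ N) *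
            (‖x‖ ^ k * ((1 + ‖x‖) ^ k₀) ^ n) := by rw [mul_pow]; ring
      _ ≤ n.factorial * (max C₀ 1) ^ n * (K / (1 + ‖x‖ ^ 2) ^ N) *
            (2 ^ N * (1 + ‖x‖ ^ 2) ^ N) := by gcongr
      _ = _ := by field_simp

end Gauss

/-! ### Primitives in the upper half-plane -/

section Contour
open MeasureTheory Set Topology
open Filter hiding ker

/-- A holomorphic function on the upper half-plane has a primitive there: the Cayley transform
reduces this to the unit disc. -/
lemma exists_primitive {h : ℂ → ℂ} (hh : DifferentiableOn ℂ h {z | 0 < z.im}) :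
    ∃ H : ℂ → ℂ, ∀ u : ℂ, 0 < u.im → HasDerivAt H (h u) u := by
  have hne : ∀ ζ ∈ Metric.ball (0 : ℂ) 1, 1 - ζ ≠ 0 := by
    intro ζ hζ h0
    rw [mem_ball_zero_iff, ← sub_eq_zero.1 h0] at hζ
    simp at hζ
  have hmaps : ∀ ζ ∈ Metric.ball (0 : ℂ) 1, 0 < (I * (1 + ζ) / (1 - ζ)).im := by
    intro ζ hζ
    have h1 : 0 < normSq (1 - ζ) := normSq_pos.2 (hne ζ hζ)
    have h2 : normSq ζ < 1 := by
      rw [mem_ball_zero_iff] at hζ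
      rw [normSq_eq_norm_sq]
      nlinarith [norm_nonneg ζ]
    have h3 : (I * (1 + ζ) / (1 - ζ)).im = (1 - normSq ζ) / normSq (1 - ζ) := by
      rw [Complex.div_im]
      simp only [normSq_apply, mul_im, mul_re, I_re, I_im, add_re, add_im, one_re, one_im, sub_re,
        sub_im]
      field_simp
      ring
    rw [h3]
    exact div_pos (by linarith) h1
  have hd : DifferentiableOn ℂ (fun ζ : ℂ => h (I * (1 + ζ) / (1 - ζ)) * (2 * I / (1 - ζ) ^ 2))
      (Metric.ball 0 1) := by
    refine DifferentiableOn.mul (hh.comp ?_ hmaps) ?_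
    · exact DifferentiableOn.div (by fun_prop) (by fun_prop) hne
    · exact DifferentiableOn.div (by fun_prop) (by fun_prop) fun ζ hζ => pow_ne_zero 2 (hne ζ hζ)
  obtain ⟨F, hF⟩ := hd.isExactOn_ball
  refine ⟨fun u => F ((u - I) / (u + I)), fun u hu => ?_⟩
  have hu0 : u + I ≠ 0 := by
    intro h0
    have := congrArg Complex.im h0
    simp at this
    linarith
  have hb : (u - I) / (u + I) ∈ Metric.ball (0 : ℂ) 1 := by
    rw [mem_ball_zero_iff, norm_div, div_lt_one (norm_pos_iff.2 hu0)]
    refine lt_of_pow_lt_pow_left₀ 2 (norm_nonneg _) ?_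
    rw [← normSq_eq_norm_sq, ← normSq_eq_norm_sq, normSq_apply, normSq_apply]
    simp
    nlinarith
  have h1 : HasDerivAt (fun u : ℂ => (u - I) / (u + I)) (2 * I / (u + I) ^ 2) u := by
    refine (((hasDerivAt_id u).sub_const I).div ((hasDerivAt_id u).add_const I) hu0).congr_deriv ?_
    simp only [id]
    congr 1
    ring
  refine ((hF _ hb).comp u h1).congr_deriv ?_
  have h2 : 1 - (u - I) / (u + I) = 2 * I / (u + I) := by
    field_simp
    ring
  have h3 : I * (1 + (u - I) / (u + I)) / (2 * I / (u + I)) = u := by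
    field_simp
    ring
  beta_reduce
  rw [h2, h3]
  have hI : I ≠ 0 := I_ne_zero
  field_simp

lemma ker_add (x : EuclideanSpace ℝ (Fin 8)) (v w : ℂ) : ker x (v + w) = ker x v * ker x w := by
  rw [ker, ker, ker, ← Complex.exp_add]
  congr 1
  ring

lemma neg_one_div_im {u : ℂ} : (-1 / u).im = u.im / normSq u := by
  rw [neg_div, one_div, neg_im, inv_im]
  ring

lemma neg_one_div_im_pos {u : ℂ} (hu : 0 < u.im) : 0 < (-1 / u).im := by
  rw [neg_one_div_im]
  refine div_pos hu (normSq_pos.2 ?_)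
  rintro rfl
  simp at hu

lemma norm_ker_le_one (x : EuclideanSpace ℝ (Fin 8)) {w : ℂ} (hw : 0 ≤ w.im) : ‖ker x w‖ ≤ 1 := by
  rw [norm_ker, Real.exp_le_one_iff]
  have := Real.pi_pos
  have : 0 ≤ π * w.im * ‖x‖ ^ 2 := by positivity
  linarith

/-- The integrand of `funA` in the variable `u = -1/w`: `φ₀(-1/w) w² e^{πi‖x‖²w} dw` becomes
`φ₀(u) u⁻⁴ e^{πi‖x‖²(-1/u)} du`. -/
noncomputable def hfun (x : EuclideanSpace ℝ (Fin 8)) (u : ℂ) : ℂ :=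
  φ₀ u * u⁻¹ ^ 4 * ker x (-1 / u)

lemma ne_zero_of_im_pos {u : ℂ} (hu : 0 < u.im) : u ≠ 0 := by
  rintro rfl
  simp at hu

lemma differentiableOn_hfun (x : EuclideanSpace ℝ (Fin 8)) :
    DifferentiableOn ℂ (hfun x) {z | 0 < z.im} := by
  have h0 : ∀ u ∈ {z : ℂ | 0 < z.im}, u ≠ 0 := fun u hu => ne_zero_of_im_pos hu
  unfold hfun ker
  refine (differentiableOn_φ₀.mul ((differentiableOn_id.inv h0).pow 4)).mul
    (DifferentiableOn.cexp (DifferentiableOn.const_mul ?_ _))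
  exact (differentiableOn_const _).div differentiableOn_id h0

/-- In the half-strip `|Re u| ≤ 1`, `Im u ≥ 1/2`, the weight `φ₀(u) u⁻⁴` is `O(e^{-2π Im u})`. -/
lemma exists_norm_weight_le :
    ∃ C, 0 ≤ C ∧ ∀ u : ℂ, |u.re| ≤ 1 → 1 / 2 ≤ u.im →
      ‖φ₀ u * u⁻¹ ^ 4‖ ≤ C * Real.exp (-2 * π * u.im) := by
  obtain ⟨C, hC0, hC⟩ := exists_norm_φ₀_le
  refine ⟨C * 2 ^ 4, by positivity, fun u h1 h2 => ?_⟩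
  have h3 : 1 / 2 ≤ ‖u‖ := h2.trans ((le_abs_self _).trans (abs_im_le_norm u))
  have h4 : ‖u‖⁻¹ ≤ 2 := by
    rw [inv_le_comm₀ (by linarith) two_pos]
    linarith
  rw [norm_mul, norm_pow, norm_inv]
  calc ‖φ₀ u‖ * ‖u‖⁻¹ ^ 4 ≤ C * Real.exp (-2 * π * u.im) * 2 ^ 4 := by
        gcongr
        exact hC u h1 h2
    _ = _ := by ring

/-- The line `t ↦ p + i t`. -/
noncomputable def vline (p t : ℝ) : ℂ := p + t * I

@[simp] lemma vline_re (p t : ℝ) : (vline p t).re = p := by simp [vline]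

@[simp] lemma vline_im (p t : ℝ) : (vline p t).im = t := by simp [vline]

lemma continuous_vline (p : ℝ) : Continuous (vline p) := by
  unfold vline
  fun_prop

lemma hasDerivAt_vline (p t : ℝ) : HasDerivAt (vline p) I t := by
  have := ((Complex.ofRealCLM.hasDerivAt (x := t)).mul_const I).const_add (p : ℂ)
  exact this.congr_deriv (by simp)

lemma integrableOn_hfun_vline (x : EuclideanSpace ℝ (Fin 8)) {p c : ℝ} (hp : |p| ≤ 1)
    (hc : 1 / 2 ≤ c) : IntegrableOn (fun t => hfun x (vline p t) * I) (Ioi c) := by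
  obtain ⟨C, hC0, hC⟩ := exists_norm_weight_le
  have hi := (integrableOn_pow_mul_exp (c := c) (by linarith) 0).const_mul C
  refine hi.mono' ?_ (ae_restrict_of_forall_mem measurableSet_Ioi fun t ht => ?_)
  · refine ContinuousOn.aestronglyMeasurable ?_ measurableSet_Ioi
    refine ContinuousOn.mul ?_ continuousOn_const
    refine (differentiableOn_hfun x).continuousOn.comp (continuous_vline p).continuousOn
      fun t ht => ?_
    have : c < t := ht
    simp only [Set.mem_ofPred_eq, vline_im]
    linarith
  · have ht : c < t := ht
    have h1 := hC (vline p t) (by simpa using hp) (by rw [vline_im]; linarith)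
    have h2 := norm_ker_le_one x (neg_one_div_im_pos (u := vline p t)
      (by rw [vline_im]; linarith)).le
    rw [vline_im] at h1
    rw [norm_mul, norm_I, mul_one, pow_zero, one_mul, hfun, norm_mul]
    have := mul_le_mul h1 h2 (norm_nonneg _) (by positivity)
    simpa using this

/-- All vertical rays in the strip `|Re u| ≤ 1` lead to the same boundary value `L` at `i∞` of a
primitive of `hfun x`, because the integrand decays uniformly in the strip. -/
lemma exists_vertical_integrals (x : EuclideanSpace ℝ (Fin 8)) {H : ℂ → ℂ}
    (hH : ∀ u : ℂ, 0 < u.im → HasDerivAt H (hfun x u) u) :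
    ∃ L : ℂ, Tendsto (fun t => H (vline 0 t)) atTop (𝓝 L) ∧
      ∀ p c : ℝ, |p| ≤ 1 → 1 / 2 ≤ c →
        ∫ t in Ioi c, hfun x (vline p t) * I = L - H (vline p c) := by
  have hder : ∀ p t : ℝ, 0 < t →
      HasDerivAt (fun t => H (vline p t)) (hfun x (vline p t) * I) t := fun p t ht =>
    (hH (vline p t) (by simpa using ht)).comp t (hasDerivAt_vline p t)
  have hL := tendsto_limUnder_of_hasDerivAt_of_integrableOn_Ioi (a := 1)
    (fun t (ht : 1 < t) => hder 0 t (by linarith))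
    (integrableOn_hfun_vline x (p := 0) (by simp) (by norm_num))
  refine ⟨_, hL, fun p c hp hc => ?_⟩
  refine integral_Ioi_of_hasDerivAt_of_tendsto'
    (fun t (ht : c ≤ t) => hder p t (by linarith)) (integrableOn_hfun_vline x hp hc) ?_
  obtain ⟨C, hC0, hC⟩ := exists_norm_weight_le
  have hdiff : Tendsto (fun t => H (vline p t) - H (vline 0 t)) atTop (𝓝 0) := by
    have h0 : Tendsto (fun t : ℝ => C * Real.exp (-2 * π * t)) atTop (𝓝 0) := by
      have h1 : Tendsto (fun t : ℝ => -2 * π * t) atTop atBot :=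
        tendsto_id.const_mul_atTop_of_neg (by linarith [Real.pi_pos])
      simpa using (Real.tendsto_exp_atBot.comp h1).const_mul C
    refine squeeze_zero_norm' ?_ h0
    filter_upwards [eventually_ge_atTop (1 / 2)] with t ht
    have hconv : Convex ℝ ({u : ℂ | |u.re| ≤ 1} ∩ {u : ℂ | t ≤ u.im}) := by
      refine Convex.inter ?_ (convex_halfSpace_im_ge t)
      have : {u : ℂ | |u.re| ≤ 1} = {u : ℂ | -1 ≤ u.re} ∩ {u : ℂ | u.re ≤ 1} := by
        ext u
        simp [abs_le]
      rw [this]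
      exact (convex_halfSpace_re_ge _).inter (convex_halfSpace_re_le _)
    have h1 := hconv.norm_image_sub_le_of_norm_hasDerivWithin_le (f := H) (f' := hfun x)
      (C := C * Real.exp (-2 * π * t)) (x := vline 0 t) (y := vline p t)
      (fun u hu => (hH u (by have : t ≤ u.im := hu.2; linarith)).hasDerivWithinAt)
      (fun u hu => by
        have hu1 : |u.re| ≤ 1 := hu.1
        have hu2 : t ≤ u.im := hu.2
        have h1 := hC u hu1 (by linarith)
        have h2 := norm_ker_le_one x (neg_one_div_im_pos (u := u) (by linarith)).le
        rw [hfun, norm_mul]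
        have h3 := mul_le_mul h1 h2 (norm_nonneg _) (by positivity)
        rw [mul_one] at h3
        refine h3.trans ?_
        have := Real.pi_pos
        have : -2 * π * u.im ≤ -2 * π * t := by nlinarith
        gcongr)
      ⟨by simp, by simp⟩ ⟨by simpa using hp, by simp⟩
    refine h1.trans ?_
    have h2 : ‖vline p t - vline 0 t‖ = |p| := by
      simp [vline]
    rw [h2]
    exact mul_le_of_le_one_right (by positivity) hp
  simpa using hdiff.add hL

/-! ### Moving the contours to vertical rays -/

/-- The common integrand `φ₀(-1/w) w² e^{πi‖x‖²w}` of the contours in `funA`, up to translation. -/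
noncomputable def kfun (x : EuclideanSpace ℝ (Fin 8)) (w : ℂ) : ℂ :=
  φ₀ (-1 / w) * w ^ 2 * ker x w

/-- The substitution `u = -1/w` carries a primitive of `hfun x` to a primitive of `kfun x`. -/
lemma hasDerivAt_comp_neg_one_div (x : EuclideanSpace ℝ (Fin 8)) {H : ℂ → ℂ}
    (hH : ∀ u : ℂ, 0 < u.im → HasDerivAt H (hfun x u) u) {w : ℂ} (hw : 0 < w.im) :
    HasDerivAt (fun w => H (-1 / w)) (kfun x w) w := by
  have hw0 := ne_zero_of_im_pos hw
  have h1 : HasDerivAt (fun w : ℂ => -1 / w) (1 / w ^ 2) w := by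
    refine ((hasDerivAt_const w (-1 : ℂ)).div (hasDerivAt_id w) hw0).congr_deriv ?_
    simp
  refine ((hH _ (neg_one_div_im_pos hw)).comp w h1).congr_deriv ?_
  have h2 : -1 / (-1 / w) = w := by field_simp
  have h3 : (-1 / w)⁻¹ ^ 4 = w ^ 4 := by
    rw [inv_div, div_neg, div_one, neg_pow]
    norm_num
  rw [hfun, kfun, h2, h3]
  field_simp

lemma continuousOn_kfun (x : EuclideanSpace ℝ (Fin 8)) :
    ContinuousOn (kfun x) {w | 0 < w.im} := by
  have h0 : ∀ u ∈ {z : ℂ | 0 < z.im}, u ≠ 0 := fun u hu => ne_zero_of_im_pos hu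
  unfold kfun ker
  refine ContinuousOn.mul (ContinuousOn.mul ?_ (by fun_prop)) (by fun_prop)
  exact continuousOn_φ₀.comp (continuousOn_const.div continuousOn_id h0)
    fun u hu => neg_one_div_im_pos hu

/-- Translating a contour by `a` costs the constant factor `e^{-πi‖x‖²a}`. -/
lemma segInt_shift (x : EuclideanSpace ℝ (Fin 8)) (a b d : ℂ) :
    segInt (fun z => φ₀ (-1 / (z + a)) * (z + a) ^ 2 * ker x z) b d =
      ker x (-a) * segInt (kfun x) (b + a) (d + a) := by
  have h : ∀ z, φ₀ (-1 / (z + a)) * (z + a) ^ 2 * ker x z = ker x (-a) * kfun x (z + a) := by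
    intro z
    have : ker x z = ker x (-a) * ker x (z + a) := by
      rw [← ker_add]
      congr 1
      ring
    rw [this, kfun]
    ring
  simp only [segInt, h]
  rw [intervalIntegral.integral_const_mul]
  have e1 : d + a - (b + a) = d - b := by ring
  have e2 : ∀ t : ℝ, b + (t : ℂ) * (d - b) + a = b + a + (t : ℂ) * (d - b) := fun t => by ring
  simp only [e1, e2]
  ring

lemma segInt_kfun (x : EuclideanSpace ℝ (Fin 8)) {H : ℂ → ℂ}
    (hH : ∀ u : ℂ, 0 < u.im → HasDerivAt H (hfun x u) u) {a b : ℂ} (ha : 0 < a.im)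
    (hb : 0 < b.im) : segInt (kfun x) a b = H (-1 / b) - H (-1 / a) := by
  have him : ∀ t ∈ uIcc (0 : ℝ) 1, 0 < (a + (t : ℂ) * (b - a)).im := by
    intro t ht
    rw [uIcc_of_le zero_le_one] at ht
    have h1 : (a + (t : ℂ) * (b - a)).im = (1 - t) * a.im + t * b.im := by
      simp
      ring
    rw [h1]
    rcases ht.1.eq_or_lt with h0 | h0
    · simp [← h0, ha]
    · have := mul_nonneg (sub_nonneg.2 ht.2) ha.le
      have := mul_pos h0 hb
      linarith
  have hc : Continuous fun t : ℝ => a + (t : ℂ) * (b - a) := by fun_prop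
  have hder : ∀ t ∈ uIcc (0 : ℝ) 1, HasDerivAt (fun t : ℝ => H (-1 / (a + (t : ℂ) * (b - a))))
      (kfun x (a + (t : ℂ) * (b - a)) * (b - a)) t := by
    intro t ht
    have h1 := ((Complex.ofRealCLM.hasDerivAt (x := t)).mul_const (b - a)).const_add a
    refine ((hasDerivAt_comp_neg_one_div x hH (him t ht)).comp t h1).congr_deriv ?_
    simp
  have hint : IntervalIntegrable (fun t : ℝ => kfun x (a + (t : ℂ) * (b - a)) * (b - a))
      volume 0 1 :=
    (((continuousOn_kfun x).comp hc.continuousOn him).mul continuousOn_const).intervalIntegrable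
  have h2 := intervalIntegral.integral_eq_sub_of_hasDerivAt hder hint
  rw [intervalIntegral.integral_mul_const] at h2
  rw [segInt, mul_comm, h2]
  simp

/-- The contour from the cusp `0` up to `i`; the substitution `u = -1/w` turns the lower endpoint
into `i∞`. -/
lemma segInt_kfun_zero (x : EuclideanSpace ℝ (Fin 8)) {H : ℂ → ℂ} {L : ℂ}
    (hH : ∀ u : ℂ, 0 < u.im → HasDerivAt H (hfun x u) u)
    (hL : Tendsto (fun t => H (vline 0 t)) atTop (𝓝 L)) :
    segInt (kfun x) 0 I = H I - L := by
  have hinv : ∀ t : ℝ, t ≠ 0 → -1 / ((t : ℂ) * I) = vline 0 t⁻¹ := by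
    intro t ht
    have : (t : ℂ) ≠ 0 := by exact_mod_cast ht
    rw [vline]
    push_cast
    field_simp
    simp
  have hder : ∀ t : ℝ, 0 < t →
      HasDerivAt (fun t : ℝ => H (-1 / ((t : ℂ) * I))) (kfun x ((t : ℂ) * I) * I) t := by
    intro t ht
    have h1 := (Complex.ofRealCLM.hasDerivAt (x := t)).mul_const I
    refine ((hasDerivAt_comp_neg_one_div x hH (by simpa using ht)).comp t h1).congr_deriv ?_
    simp
  have hcont : ContinuousOn (fun t : ℝ => kfun x ((t : ℂ) * I) * I) (Ioc 0 1) := by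
    refine ContinuousOn.mul ?_ continuousOn_const
    refine (continuousOn_kfun x).comp (by fun_prop) fun t ht => ?_
    simpa using ht.1
  have hint : IntervalIntegrable (fun t : ℝ => kfun x ((t : ℂ) * I) * I) volume 0 1 := by
    rw [intervalIntegrable_iff_integrableOn_Ioc_of_le zero_le_one]
    obtain ⟨C, hC0, hC⟩ := exists_norm_φ₀_le
    have hb : IntegrableOn (fun _ : ℝ => C) (Ioc (0 : ℝ) 1) := by simp
    refine hb.mono' (hcont.aestronglyMeasurable measurableSet_Ioc)
      (ae_restrict_of_forall_mem measurableSet_Ioc fun t ht => ?_)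
    have ht1 : 1 ≤ t⁻¹ := (one_le_inv₀ ht.1).2 ht.2
    have h1 := hC (vline 0 t⁻¹) (by simp) (by rw [vline_im]; linarith)
    have h2 : Real.exp (-2 * π * (vline 0 t⁻¹).im) ≤ 1 := by
      rw [Real.exp_le_one_iff, vline_im]
      nlinarith [Real.pi_pos]
    have h3 := norm_ker_le_one x (w := (t : ℂ) * I) (by simpa using ht.1.le)
    have h4 : ‖(t : ℂ) * I‖ ^ 2 ≤ 1 := by
      simp only [norm_mul, norm_I, mul_one, Complex.norm_real, Real.norm_eq_abs, sq_abs]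
      exact pow_le_one₀ ht.1.le ht.2
    rw [norm_mul, norm_I, mul_one, kfun, norm_mul, norm_mul, norm_pow, hinv t ht.1.ne']
    calc ‖φ₀ (vline 0 t⁻¹)‖ * ‖(t : ℂ) * I‖ ^ 2 * ‖ker x ((t : ℂ) * I)‖
        ≤ C * 1 * 1 * 1 := by
          gcongr
          exact h1.trans (by gcongr)
      _ = C := by ring
  have hlim0 : Tendsto (fun t : ℝ => H (-1 / ((t : ℂ) * I))) (𝓝[>] 0) (𝓝 L) := by
    refine (hL.comp tendsto_inv_nhdsGT_zero).congr' ?_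
    filter_upwards [self_mem_nhdsWithin] with t ht
    have ht : 0 < t := ht
    simp [hinv t ht.ne']
  have hlim1 : Tendsto (fun t : ℝ => H (-1 / ((t : ℂ) * I))) (𝓝[<] 1) (𝓝 (H I)) := by
    have := ((hder 1 one_pos).continuousAt.tendsto).mono_left
      (nhdsWithin_le_nhds (s := Iio (1 : ℝ)))
    rw [hinv 1 one_ne_zero] at this
    simpa [vline] using this
  have h := intervalIntegral.integral_eq_sub_of_hasDerivAt_of_tendsto zero_lt_one
    (fun t ht => hder t ht.1) hint hlim0 hlim1
  rw [intervalIntegral.integral_mul_const] at h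
  rw [segInt]
  simp only [sub_zero, zero_add]
  rw [mul_comm, h]

/-- The path `w = p - 1/u`, where `u` runs up a vertical line. -/
noncomputable def zpath (p q t : ℝ) : ℂ := p + -1 / vline q t

/-- The weight `k i φ₀(u) u⁻⁴` on a vertical line. -/
noncomputable def gpath (k : ℂ) (q t : ℝ) : ℂ := k * I * (φ₀ (vline q t) * (vline q t)⁻¹ ^ 4)

lemma gaussInt_path (x : EuclideanSpace ℝ (Fin 8)) {H : ℂ → ℂ} {L : ℂ}
    (hV : ∀ p c : ℝ, |p| ≤ 1 → 1 / 2 ≤ c →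
        ∫ t in Ioi c, hfun x (vline p t) * I = L - H (vline p c))
    (k : ℂ) (p : ℝ) {q c : ℝ} (hq : |q| ≤ 1) (hc : 1 / 2 ≤ c) :
    gaussInt c (gpath k q) (zpath p q) x = k * ker x p * (L - H (vline q c)) := by
  rw [← hV q c hq hc, gaussInt, ← integral_const_mul]
  congr 1
  ext t
  rw [zpath, ker_add, gpath, hfun]
  ring

/-- After contour deformation, `funA` is a sum of four superpositions of Gaussians. -/
lemma funA_eq : funA = fun x =>
    gaussInt (1 / 2) (gpath (-1) (-1 / 2)) (zpath (-1) (-1 / 2)) x +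
    gaussInt (1 / 2) (gpath (-1) (1 / 2)) (zpath 1 (1 / 2)) x +
    gaussInt 1 (gpath 2 0) (zpath 0 0) x +
    gaussInt 1 (fun t => 2 * I * φ₀ (vline 0 t)) (vline 0) x := by
  ext x
  obtain ⟨H, hH⟩ := exists_primitive (differentiableOn_hfun x)
  obtain ⟨L, hL, hV⟩ := exists_vertical_integrals x hH
  rw [gaussInt_path x hV _ _ (by norm_num [abs_le]) le_rfl,
    gaussInt_path x hV _ _ (by norm_num [abs_le]) le_rfl,
    gaussInt_path x hV _ _ (by norm_num) (by norm_num)]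
  have hI : -1 / I = I := by simp
  have hv0 : vline 0 1 = I := by simp [vline]
  -- the corners `±1 + i` of the translated contours are the images of `∓1/2 + i/2`
  have hv1 : -1 / (I + 1) = vline (-1 / 2) (1 / 2) := by
    have : I + 1 ≠ 0 := fun h => by simpa using congrArg Complex.im h
    rw [vline, div_eq_iff this]
    push_cast
    ring_nf
    simp
    norm_num
  have hv2 : -1 / (I + -1) = vline (1 / 2) (1 / 2) := by
    have : I + -1 ≠ 0 := fun h => by simpa using congrArg Complex.im h
    rw [vline, div_eq_iff this]
    push_cast
    ring_nf
    simp
    norm_num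
  have s0 := segInt_kfun_zero x hH hL
  have s1 : segInt (kfun x) I (I + 1) = H (vline (-1 / 2) (1 / 2)) - H I := by
    rw [segInt_kfun x hH (by simp) (by simp), hv1, hI]
  have s2 : segInt (kfun x) I (I + -1) = H (vline (1 / 2) (1 / 2)) - H I := by
    rw [segInt_kfun x hH (by simp) (by simp), hv2, hI]
  have hray : 2 * imAxisRayInt (fun z => φ₀ z * ker x z) 1 =
      gaussInt 1 (fun t => 2 * I * φ₀ (vline 0 t)) (vline 0) x := by
    rw [imAxisRayInt, gaussInt, ← integral_const_mul]
    congr 1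
    ext t
    simp only [vline, ofReal_zero, zero_add]
    ring
  have hk : (fun z => φ₀ (-1 / z) * z ^ 2 * ker x z) = kfun x := rfl
  have e0 : ker x ((0 : ℝ) : ℂ) = 1 := by simp [ker]
  have e1 : -1 + 1 = (0 : ℂ) := by ring
  have e2 : -1 + I + 1 = I := by ring
  have e3 : 1 + -1 = (0 : ℂ) := by ring
  have e4 : 1 + I + -1 = I := by ring
  rw [funA, hray, hk, s0]
  simp only [sub_eq_add_neg _ (1 : ℂ)]
  rw [segInt_shift, segInt_shift, segInt_shift, segInt_shift, e1, e2, e3, e4, s0, s1, s2, e0, hv0]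
  push_cast
  rw [neg_neg]
  ring

end Contour

/-! ### The action of the Fourier transform on the four pieces -/

section Final
open MeasureTheory Set

lemma admissible_path (k : ℂ) (p : ℝ) {q c : ℝ} (hq : |q| ≤ 1) (hc : 1 / 2 ≤ c) :
    Admissible c (gpath k q) (zpath p q) where
  pos := by linarith
  g_cont := by
    have hm : MapsTo (vline q) (Ioi c) {z : ℂ | 0 < z.im} := fun t (ht : c < t) => by
      simp only [Set.mem_ofPred_eq, vline_im]
      linarith
    have h1 := continuousOn_φ₀.comp (continuous_vline q).continuousOn hm
    have h2 := (continuous_vline q).continuousOn.inv₀ (s := Ioi c)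
      fun t ht => ne_zero_of_im_pos (hm ht)
    exact continuousOn_const.mul (h1.mul (h2.pow 4))
  z_cont := by
    refine continuousOn_const.add
      (continuousOn_const.div (continuous_vline q).continuousOn fun t (ht : c < t) => ?_)
    exact ne_zero_of_im_pos (by rw [vline_im]; linarith)
  g_le := by
    obtain ⟨C, hC0, hC⟩ := exists_norm_weight_le
    refine ⟨‖k‖ * C, by positivity, fun t ht => ?_⟩
    have h1 := hC (vline q t) (by simpa using hq) (by rw [vline_im]; linarith)
    rw [vline_im] at h1
    rw [gpath, norm_mul, norm_mul, norm_I, mul_one, mul_assoc]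
    gcongr
  im_ge := by
    refine ⟨1 / 5, by norm_num, fun t ht => ?_⟩
    have ht0 : 1 / 2 < t := by linarith
    have h1 : (zpath p q t).im = t / (q ^ 2 + t ^ 2) := by
      rw [zpath, add_im, ofReal_im, zero_add, neg_one_div_im, normSq_apply, vline_re, vline_im]
      ring
    have h2 : q ^ 2 ≤ 1 := (sq_le_one_iff_abs_le_one q).2 hq
    rw [h1, div_le_div_iff₀ (by linarith) (by nlinarith)]
    nlinarith

lemma admissible_ray : Admissible 1 (fun t => 2 * I * φ₀ (vline 0 t)) (vline 0) where
  pos := one_pos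
  g_cont := by
    refine continuousOn_const.mul (continuousOn_φ₀.comp (continuous_vline 0).continuousOn
      fun t (ht : 1 < t) => ?_)
    simp only [Set.mem_ofPred_eq, vline_im]
    linarith
  z_cont := (continuous_vline 0).continuousOn
  g_le := by
    obtain ⟨C, hC0, hC⟩ := exists_norm_φ₀_le
    refine ⟨2 * C, by positivity, fun t ht => ?_⟩
    have h1 := hC (vline 0 t) (by simp) (by rw [vline_im]; linarith)
    rw [vline_im] at h1
    rw [norm_mul, norm_mul, norm_I, mul_one, mul_assoc, Complex.norm_two]
    gcongr
  im_ge := by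
    refine ⟨1, one_pos, fun t ht => ?_⟩
    rw [vline_im, div_le_iff₀ (by linarith)]
    nlinarith

lemma vline_half {t : ℝ} (ht : 1 / 2 < t) :
    vline (-1 / 2) t ≠ 0 ∧ vline (1 / 2) t ≠ 0 ∧ vline (1 / 2) t = vline (-1 / 2) t + 1 := by
  refine ⟨ne_zero_of_im_pos (by rw [vline_im]; linarith),
    ne_zero_of_im_pos (by rw [vline_im]; linarith), ?_⟩
  simp only [vline]
  push_cast
  ring

lemma zpath_left {t : ℝ} (ht : 1 / 2 < t) :
    zpath (-1) (-1 / 2) t = -(vline (1 / 2) t / vline (-1 / 2) t) := by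
  obtain ⟨hu, -, huv⟩ := vline_half ht
  rw [zpath, huv, add_div, div_self hu]
  push_cast
  ring

lemma zpath_right {t : ℝ} (ht : 1 / 2 < t) :
    zpath 1 (1 / 2) t = vline (-1 / 2) t / vline (1 / 2) t := by
  obtain ⟨-, hv, huv⟩ := vline_half ht
  rw [zpath, eq_sub_of_add_eq huv.symm, sub_div, div_self hv]
  push_cast
  ring

lemma φ₀_vline_half (t : ℝ) : φ₀ (vline (1 / 2) t) = φ₀ (vline (-1 / 2) t) := by
  rw [← φ₀_add_one (vline (-1 / 2) t)]
  congr 1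
  simp only [vline]
  push_cast
  ring

/-- Write `z = -1 - 1/u` with `Re u = -1/2`. Then `-1/z = 1 - 1/(u + 1)` and
`z⁻⁴ u⁻⁴ = (u + 1)⁻⁴`, so periodicity of `φ₀` turns the first contour into the second one. -/
lemma fourier_left :
    𝓕 (gaussInt (1 / 2) (gpath (-1) (-1 / 2)) (zpath (-1) (-1 / 2))) =
      gaussInt (1 / 2) (gpath (-1) (1 / 2)) (zpath 1 (1 / 2)) := by
  rw [(admissible_path (-1) (-1) (by norm_num [abs_le]) le_rfl).fourier_gaussInt]
  ext x
  refine setIntegral_congr_fun measurableSet_Ioi fun t (ht : 1 / 2 < t) => ?_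
  obtain ⟨hu, hv, -⟩ := vline_half ht
  beta_reduce
  rw [gpath, gpath, φ₀_vline_half, zpath_left ht, zpath_right ht]
  generalize vline (-1 / 2) t = u at *
  generalize vline (1 / 2) t = v at *
  have h1 : -1 / -(v / u) = u / v := by field_simp
  have h2 : u⁻¹ ^ 4 * (-(v / u))⁻¹ ^ 4 = v⁻¹ ^ 4 := by field_simp
  rw [h1, ← h2]
  ring

/-- The mirror image of `fourier_left`. -/
lemma fourier_right :
    𝓕 (gaussInt (1 / 2) (gpath (-1) (1 / 2)) (zpath 1 (1 / 2))) =
      gaussInt (1 / 2) (gpath (-1) (-1 / 2)) (zpath (-1) (-1 / 2)) := by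
  rw [(admissible_path (-1) 1 (by norm_num [abs_le]) le_rfl).fourier_gaussInt]
  ext x
  refine setIntegral_congr_fun measurableSet_Ioi fun t (ht : 1 / 2 < t) => ?_
  obtain ⟨hu, hv, -⟩ := vline_half ht
  beta_reduce
  rw [gpath, gpath, φ₀_vline_half, zpath_left ht, zpath_right ht]
  generalize vline (-1 / 2) t = u at *
  generalize vline (1 / 2) t = v at *
  have h1 : -1 / (u / v) = -(v / u) := by field_simp
  have h2 : v⁻¹ ^ 4 * (u / v)⁻¹ ^ 4 = u⁻¹ ^ 4 := by field_simp
  rw [h1, ← h2]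
  ring

/-- The contour from `0` to `i` is exchanged with the one from `i` to `i∞`. -/
lemma fourier_cusp :
    𝓕 (gaussInt 1 (gpath 2 0) (zpath 0 0)) =
      gaussInt 1 (fun t => 2 * I * φ₀ (vline 0 t)) (vline 0) := by
  rw [(admissible_path 2 0 (by norm_num) (by norm_num)).fourier_gaussInt]
  ext x
  refine setIntegral_congr_fun measurableSet_Ioi fun t (ht : 1 < t) => ?_
  have hu : vline 0 t ≠ 0 := ne_zero_of_im_pos (by rw [vline_im]; linarith)
  have hz : zpath 0 0 t = -1 / vline 0 t := by simp [zpath]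
  have hz' : -1 / (-1 / vline 0 t) = vline 0 t := by field_simp
  beta_reduce
  rw [hz, hz', gpath]
  field_simp

lemma fourier_ray :
    𝓕 (gaussInt 1 (fun t => 2 * I * φ₀ (vline 0 t)) (vline 0)) =
      gaussInt 1 (gpath 2 0) (zpath 0 0) := by
  rw [admissible_ray.fourier_gaussInt]
  ext x
  refine setIntegral_congr_fun measurableSet_Ioi fun t _ => ?_
  beta_reduce
  rw [zpath, gpath, ofReal_zero, zero_add, mul_assoc (2 * I)]

/-- On these two paths `z = -(u + 1)/u` with `Re u = -1/2`, respectively `z = (u - 1)/u` with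
`Re u = 1/2`, so in fact `‖z‖ = 1`. -/
lemma norm_zpath_le {p q t : ℝ} (h : (p = -1 ∧ q = -1 / 2) ∨ (p = 1 ∧ q = 1 / 2)) (ht : 1 / 2 < t) :
    ‖zpath p q t‖ ≤ 1 := by
  have hu : vline q t ≠ 0 := ne_zero_of_im_pos (by rw [vline_im]; linarith)
  have hz : zpath p q t = (p * vline q t - 1) / vline q t := by
    rw [zpath]
    field_simp
    ring
  rw [hz, norm_div, div_le_one (norm_pos_iff.2 hu)]
  refine le_of_pow_le_pow_left₀ two_ne_zero (norm_nonneg _) ?_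
  rw [← normSq_eq_norm_sq, ← normSq_eq_norm_sq, normSq_apply, normSq_apply]
  simp only [sub_re, sub_im, re_ofReal_mul, im_ofReal_mul, vline_re, vline_im, one_re, one_im]
  rcases h with ⟨rfl, rfl⟩ | ⟨rfl, rfl⟩ <;> nlinarith

lemma exists_schwartz_funA :
    ∃ A : SchwartzMap (EuclideanSpace ℝ (Fin 8)) ℂ, ⇑A = funA ∧ 𝓕 A = A := by
  obtain ⟨S₁, h₁⟩ := (admissible_path (-1) (-1) (q := -1 / 2) (c := 1 / 2)
    (by norm_num [abs_le]) le_rfl).exists_schwartz fun t ht => norm_zpath_le (by norm_num) ht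
  obtain ⟨S₂, h₂⟩ := (admissible_path (-1) 1 (q := 1 / 2) (c := 1 / 2)
    (by norm_num [abs_le]) le_rfl).exists_schwartz fun t ht => norm_zpath_le (by norm_num) ht
  obtain ⟨S₃, h₃⟩ := (admissible_path 2 0 (q := 0) (c := 1)
    (by norm_num) (by norm_num)).exists_schwartz fun t ht => by
      rw [zpath, vline]
      simp only [ofReal_zero, zero_add, norm_div, norm_neg, norm_one, norm_mul, norm_I, mul_one,
        Complex.norm_real, Real.norm_eq_abs]
      rw [abs_of_pos (by linarith), div_le_one (by linarith)]
      exact ht.le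
  have k₁ : 𝓕 S₁ = S₂ := DFunLike.coe_injective (by
    rw [SchwartzMap.fourier_coe, h₁, h₂, fourier_left])
  have k₂ : 𝓕 S₂ = S₁ := DFunLike.coe_injective (by
    rw [SchwartzMap.fourier_coe, h₁, h₂, fourier_right])
  have h₄ : ⇑(𝓕 S₃ : SchwartzMap (EuclideanSpace ℝ (Fin 8)) ℂ) = gaussInt 1 (fun t => 2 * I * φ₀ (vline 0 t)) (vline 0) := by
    rw [SchwartzMap.fourier_coe, h₃, fourier_cusp]
  have k₄ : 𝓕 (𝓕 S₃) = S₃ := DFunLike.coe_injective (by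
    rw [SchwartzMap.fourier_coe, h₄, fourier_ray, h₃])
  -- the path of the fourth piece is unbounded, but the piece is the Fourier transform of the third
  refine ⟨S₁ + S₂ + S₃ + 𝓕 S₃, ?_, ?_⟩
  · ext x
    rw [funA_eq, ← h₁, ← h₂, ← h₃, ← h₄]
    simp only [add_apply]
  · rw [FourierTransform.fourier_add, FourierTransform.fourier_add, FourierTransform.fourier_add,
      k₁, k₂, k₄]
    abel

lemma funA_congr {x y : EuclideanSpace ℝ (Fin 8)} (h : ‖x‖ = ‖y‖) : funA x = funA y := by
  have : ker x = ker y := by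
    ext z
    rw [ker, ker, h]
  rw [funA, funA, this]

end Final

/-- The function `a` is a radial Schwartz function on `ℝ⁸` and a `+1`-eigenfunction of the
Fourier transform: `â = a`. -/
theorem funA_schwartz_radial_eigenfunction :
    (∃ A : SchwartzMap (EuclideanSpace ℝ (Fin 8)) ℂ, ⇑A = funA) ∧
    (∀ x y : EuclideanSpace ℝ (Fin 8), ‖x‖ = ‖y‖ → funA x = funA y) ∧
    𝓕 funA = funA := by
  obtain ⟨A, hA, hF⟩ := exists_schwartz_funA
  refine ⟨⟨A, hA⟩, fun x y h => funA_congr h, ?_⟩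
  rw [← hA, ← SchwartzMap.fourier_coe, hF]
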